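/- Let Ω ⊂ ℝ^n be a bounded domain with C¹ boundary and s ∈ (0,1). Let u : ℝ^n → ℝ be continuous on closure(Ω) and satisfy the homogeneous nonlocal Neumann condition N_s u(x) = 0 for every x ∈ ℝ^n\closure(Ω), i.e. u(x) = (∫_Ω u(y)|x−y|^{−n−2s} dy)/(∫_Ω |x−y|^{−n−2s} dy) for all such x. Then u is continuous on all of ℝ^n. -/

import Mathlib

/-!
Off `closure Ω` the kernel `|x-y|^{-(n+2s)}` is bounded for `y ∈ Ω`, locally uniformly in `x`, so
the Neumann quotient is continuous there by dominated convergence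
(`continuousAt_integral_div_nsKer`); inside `Ω` there is nothing to prove.

At a boundary point `x₀`, the value `u x` at an exterior point `x` is the average of `u` over `Ω`
with weight `|x-y|^{-(n+2s)}`.  The part of the weight at distance at least `δ` from `x₀` stays
bounded as `x → x₀`, while the total weight tends to infinity (`tendsto_integral_inv_nsKer`), so
the average concentrates at `x₀` and tends to `u x₀`.

The total weight blows up because of an interior corkscrew condition
(`IsC1Domain.exists_corkscrew`): for small `t`, the set `Ω ∩ B(x₀, t)` contains a ball of radius
`η t`.  With `t = |x - x₀|`, the weight on that ball is at least `(2t)^{-(n+2s)}` and its volume is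
comparable to `t^n`, so the total weight is at least a multiple of `t^{-2s}`.
-/

open MeasureTheory Filter Set Bornology
open scoped Topology ENNReal NNReal Pointwise symmDiff

noncomputable section

/-- `ℝ^n` as a Euclidean space. -/
abbrev En (n : ℕ) := EuclideanSpace ℝ (Fin n)

/-- The normalization constant `c_{n,s}` of the fractional Laplacian. -/
def cns (n : ℕ) (s : ℝ) : ℝ :=
  4 ^ s * Real.Gamma ((n : ℝ) / 2 + s) / (Real.pi ^ ((n : ℝ) / 2) * |Real.Gamma (-s)|)

/-- `Q(Ω) = ℝ^{2n} \ (CΩ × CΩ)`. -/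
def Qset (n : ℕ) (Ω : Set (En n)) : Set (En n × En n) := (Ωᶜ ×ˢ Ωᶜ)ᶜ

/-- The kernel `|x-y|^{n+2s}`. -/
def nsKer (n : ℕ) (s : ℝ) (x y : En n) : ℝ := dist x y ^ ((n : ℝ) + 2 * s)

/-- The nonlocal normal derivative `N_s u (x) = c_{n,s} ∫_Ω (u x - u y)/|x-y|^{n+2s} dy`. -/
def NsD (n : ℕ) (s : ℝ) (Ω : Set (En n)) (u : En n → ℝ) (x : En n) : ℝ :=
  cns n s * ∫ y in Ω, (u x - u y) / nsKer n s x y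

/-- The renormalized nonlocal normal derivative `Ñ_s u`. -/
def NsTilde (n : ℕ) (s : ℝ) (Ω : Set (En n)) (u : En n → ℝ) (x : En n) : ℝ :=
  NsD n s Ω u x / (cns n s * ∫ y in Ω, (nsKer n s x y)⁻¹)

/-- The fractional Laplacian `(-Δ)^s u (x)`, defined as a principal value. -/
def fracLap (n : ℕ) (s : ℝ) (u : En n → ℝ) (x : En n) : ℝ :=
  cns n s * limUnder (𝓝[>] (0 : ℝ))
    (fun ε => ∫ y in {y : En n | ε ≤ dist x y}, (u x - u y) / nsKer n s x y)

/-- The Gagliardo-type bilinear form over `Q(Ω)`. -/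
def gagliardo2 (n : ℕ) (s : ℝ) (Ω : Set (En n)) (u v : En n → ℝ) : ℝ :=
  ∫ p in Qset n Ω, (u p.1 - u p.2) * (v p.1 - v p.2) / nsKer n s p.1 p.2

/-- Membership in the space `H^s_{Ω,g}`. -/
def InHs (n : ℕ) (s : ℝ) (Ω : Set (En n)) (g : En n → ℝ) (u : En n → ℝ) : Prop :=
  Measurable u ∧
  IntegrableOn (fun x => u x ^ 2) Ω ∧
  IntegrableOn (fun x => |g x| * u x ^ 2) Ωᶜ ∧
  IntegrableOn (fun p : En n × En n => (u p.1 - u p.2) ^ 2 / nsKer n s p.1 p.2) (Qset n Ω)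

/-- The squared norm of `H^s_{Ω,g}`. -/
def hsNormSq (n : ℕ) (s : ℝ) (Ω : Set (En n)) (g : En n → ℝ) (u : En n → ℝ) : ℝ :=
  (∫ x in Ω, u x ^ 2) + (∫ x in Ωᶜ, |g x| * u x ^ 2) + gagliardo2 n s Ω u u

/-- The scalar product of `H^s_{Ω,g}`. -/
def hsInner (n : ℕ) (s : ℝ) (Ω : Set (En n)) (g : En n → ℝ) (u v : En n → ℝ) : ℝ :=
  (∫ x in Ω, u x * v x) + (∫ x in Ωᶜ, |g x| * (u x * v x)) + gagliardo2 n s Ω u v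

/-- `u` is a weak solution of `(-Δ)^s u = f` in `Ω`, `N_s u = g` in `ℝ^n \ Ω̄`. -/
def IsWeakSol (n : ℕ) (s : ℝ) (Ω : Set (En n)) (f g : En n → ℝ) (u : En n → ℝ) : Prop :=
  InHs n s Ω (fun _ => 0) u ∧
  ∀ v : En n → ℝ, InHs n s Ω g v →
    cns n s / 2 * gagliardo2 n s Ω u v = (∫ x in Ω, f x * v x) + ∫ x in Ωᶜ, g x * v x

/-- Last coordinate of a point of `ℝ^n`. -/
def lastCoord {n : ℕ} (x : En n) : ℝ :=
  if h : 0 < n then x ⟨n - 1, Nat.sub_lt h Nat.one_pos⟩ else 0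

/-- The first `n-1` coordinates of a point of `ℝ^n`. -/
def frontCoords {n : ℕ} (x : En n) : EuclideanSpace ℝ (Fin (n - 1)) :=
  (WithLp.equiv 2 (Fin (n - 1) → ℝ)).symm fun i => x (Fin.castLE (Nat.sub_le n 1) i)

/-- A bounded Lipschitz domain: open, bounded, nonempty, and near each boundary point the
domain is (up to a rigid motion) the subgraph of a Lipschitz function. -/
def IsLipschitzDomain (n : ℕ) (Ω : Set (En n)) : Prop :=
  IsOpen Ω ∧ IsBounded Ω ∧ Ω.Nonempty ∧
  ∀ p ∈ frontier Ω, ∃ (φ : En n ≃ᵢ En n) (γ : EuclideanSpace ℝ (Fin (n - 1)) → ℝ)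
    (L : ℝ≥0) (r : ℝ), 0 < r ∧ LipschitzWith L γ ∧ φ p = 0 ∧
    (φ '' Ω) ∩ Metric.ball 0 r = {x : En n | lastCoord x < γ (frontCoords x)} ∩ Metric.ball 0 r

/-- A bounded domain with `C¹` boundary. -/
def IsC1Domain (n : ℕ) (Ω : Set (En n)) : Prop :=
  IsOpen Ω ∧ IsBounded Ω ∧ Ω.Nonempty ∧
  ∀ p ∈ frontier Ω, ∃ (φ : En n ≃ᵢ En n) (γ : EuclideanSpace ℝ (Fin (n - 1)) → ℝ)
    (r : ℝ), 0 < r ∧ ContDiff ℝ 1 γ ∧ φ p = 0 ∧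
    (φ '' Ω) ∩ Metric.ball 0 r = {x : En n | lastCoord x < γ (frontCoords x)} ∩ Metric.ball 0 r

/-- The Laplacian `Δu = ∑ ∂²u/∂xᵢ²`. -/
def lapl {n : ℕ} (u : En n → ℝ) (x : En n) : ℝ :=
  ∑ i : Fin n,
    fderiv ℝ (fun y => fderiv ℝ u y (EuclideanSpace.single i (1 : ℝ))) x
      (EuclideanSpace.single i (1 : ℝ))

/-- The surface measure `ω_{n-1}` of the unit sphere of `ℝ^n`. -/
def sphereSurf (n : ℕ) : ℝ := n * (volume (Metric.ball (0 : En n) 1)).toReal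

/-- The unit vector `e_n`. -/
def eLast (n : ℕ) : En n :=
  if h : 0 < n then EuclideanSpace.single (⟨n - 1, Nat.sub_lt h Nat.one_pos⟩ : Fin n) (1 : ℝ)
  else 0

/-- The halfspace `Π = {x_n < 0}`. -/
def halfSpaceNeg (n : ℕ) : Set (En n) := {x : En n | lastCoord x < 0}

end

section NeumannContinuity

/-! ### The interior corkscrew condition -/

lemma lastCoord_eq {n : ℕ} (hn : 0 < n) (x : En n) :
    lastCoord x = x ⟨n - 1, Nat.sub_lt hn Nat.one_pos⟩ := by
  simp [lastCoord, hn]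

lemma frontCoords_apply {n : ℕ} (x : En n) (i : Fin (n - 1)) :
    frontCoords x i = x (Fin.castLE (Nat.sub_le n 1) i) := rfl

lemma continuous_lastCoord {n : ℕ} (hn : 0 < n) : Continuous (lastCoord (n := n)) := by
  have h : (lastCoord (n := n)) = fun x : En n => x ⟨n - 1, Nat.sub_lt hn Nat.one_pos⟩ := by
    funext x
    exact lastCoord_eq hn x
  rw [h]
  fun_prop

lemma norm_frontCoords_le {n : ℕ} (x : En n) : ‖frontCoords x‖ ≤ ‖x‖ := by
  rw [EuclideanSpace.norm_eq, EuclideanSpace.norm_eq]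
  apply Real.sqrt_le_sqrt
  simp only [frontCoords_apply]
  have h := Finset.sum_map Finset.univ (Fin.castLEEmb (Nat.sub_le n 1)) (fun j => ‖x j‖ ^ 2)
  refine h.symm.trans_le ?_
  exact Finset.sum_le_sum_of_subset_of_nonneg (Finset.subset_univ _)
    (fun _ _ _ => by positivity)

lemma continuous_frontCoords {n : ℕ} : Continuous (frontCoords (n := n)) := by
  have h : (frontCoords (n := n)) = fun x : En n =>
      WithLp.toLp 2 (fun i : Fin (n - 1) => x (Fin.castLE (Nat.sub_le n 1) i)) := rfl
  rw [h]
  fun_prop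

/-- Near a boundary point, a `C¹` domain contains at every small scale `t` a ball of radius
proportional to `t`. -/
lemma IsC1Domain.exists_corkscrew {n : ℕ} (hn : 0 < n) {Ω : Set (En n)} (hΩ : IsC1Domain n Ω)
    {p : En n} (hp : p ∈ frontier Ω) :
    ∃ η > 0, ∃ t₀ > 0, ∀ t, 0 < t → t < t₀ →
      ∃ c : En n, Metric.ball c (η * t) ⊆ Ω ∩ Metric.ball p t := by
  obtain ⟨-, -, -, hloc⟩ := hΩ
  obtain ⟨φ, γ, r, hr, hγ, hφp, hset⟩ := hloc p hp
  have hmem : ∀ y : En n, dist y p < r → (y ∈ Ω ↔ lastCoord (φ y) < γ (frontCoords (φ y))) := by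
    intro y hy
    have hb : φ y ∈ Metric.ball (0 : En n) r := by
      rw [Metric.mem_ball, ← hφp, φ.dist_eq]
      exact hy
    have h := Set.ext_iff.1 hset (φ y)
    simp only [Set.mem_inter_iff, hb, and_true, Set.mem_ofPred_eq,
      φ.injective.mem_set_image] at h
    exact h
  have hfront0 : frontCoords (0 : En n) = 0 := by
    ext i
    simp [frontCoords_apply]
  have hlast0 : lastCoord (0 : En n) = 0 := by
    rw [lastCoord_eq hn]
    simp
  -- Only `0 ≤ γ 0` is needed; it follows from `p ∈ closure Ω` by passing to the limit.
  have hγ0 : 0 ≤ γ 0 := by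
    by_contra! hneg
    have hcont : Continuous fun y => γ (frontCoords (φ y)) - lastCoord (φ y) :=
      (hγ.continuous.comp (continuous_frontCoords.comp φ.continuous)).sub
        ((continuous_lastCoord hn).comp φ.continuous)
    have hev : ∀ᶠ y in 𝓝 p, γ (frontCoords (φ y)) - lastCoord (φ y) < 0 := by
      apply hcont.continuousAt.eventually_lt continuousAt_const
      rw [hφp, hfront0, hlast0]
      linarith
    obtain ⟨y, hyΩ, hy1, hy2⟩ := ((mem_closure_iff_frequently.1 hp.1).and_eventually
      (hev.and (Metric.ball_mem_nhds p hr))).exists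
    have := (hmem y hy2).1 hyΩ
    linarith
  obtain ⟨K, S, hS, hK⟩ := (hγ.contDiffAt (x := 0)).exists_lipschitzOnWith
  obtain ⟨ρ, hρ, hρS⟩ := Metric.mem_nhds_iff.1 hS
  have hlow : ∀ z, ‖z‖ < ρ → -(K * ‖z‖) ≤ γ z := by
    intro z hz
    have h := hK.dist_le_mul z (hρS (by simpa using hz)) 0 (hρS (by simpa using hρ))
    rw [Real.dist_eq, dist_zero_right] at h
    have := (abs_le.1 h).1
    linarith
  have hKnn : (0 : ℝ) ≤ K := K.2
  set η : ℝ := 1 / (2 * (K + 1)) with hηdef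
  have hη : 0 < η := by positivity
  have hηK : η * K + η = 1 / 2 := by
    rw [hηdef]
    field_simp
  have hη2 : η ≤ 1 / 2 := by nlinarith
  refine ⟨η, hη, min r ρ, lt_min hr hρ, fun t ht htt => ?_⟩
  have htr : t < r := htt.trans_le (min_le_left _ _)
  have htρ : t < ρ := htt.trans_le (min_le_right _ _)
  set j : Fin n := ⟨n - 1, Nat.sub_lt hn Nat.one_pos⟩ with hj
  -- The centre lies at depth `t / 2` below the boundary point in the graph coordinates.
  set c : En n := EuclideanSpace.single j (-(t / 2)) with hc
  have hcn : ‖c‖ = t / 2 := by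
    rw [hc, PiLp.norm_single, norm_neg, Real.norm_of_nonneg (by positivity)]
  refine ⟨φ.symm c, fun y hy => ?_⟩
  have hyc : ‖φ y - c‖ < η * t := by
    rw [← dist_eq_norm, ← φ.apply_symm_apply c, φ.dist_eq]
    exact hy
  have hyp : dist y p < t := by
    rw [← φ.dist_eq, hφp, dist_zero_right]
    have h1 : ‖φ y‖ ≤ ‖φ y - c‖ + ‖c‖ := by simpa using norm_add_le (φ y - c) c
    nlinarith
  refine ⟨(hmem y (hyp.trans htr)).2 ?_, hyp⟩
  have hf : frontCoords (φ y) = frontCoords (φ y - c) := by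
    ext i
    have hne : Fin.castLE (Nat.sub_le n 1) i ≠ j := by
      intro h
      have := congrArg Fin.val h
      simp [hj] at this
      omega
    simp [frontCoords_apply, hc, hne]
  have hfn : ‖frontCoords (φ y)‖ ≤ ‖φ y - c‖ := hf ▸ norm_frontCoords_le _
  have hl : lastCoord (φ y) ≤ -(t / 2) + ‖φ y - c‖ := by
    have h := PiLp.norm_apply_le (φ y - c) j
    have h2 := (le_abs_self _).trans h
    simp [hc] at h2
    rw [lastCoord_eq hn]
    linarith
  have hg := hlow (frontCoords (φ y)) (by nlinarith)
  have h3 : K * ‖frontCoords (φ y)‖ ≤ K * (η * t) :=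
    mul_le_mul_of_nonneg_left (hfn.trans hyc.le) hKnn
  nlinarith

/-! ### The kernel away from the domain -/

lemma nsKer_nonneg (n : ℕ) (s : ℝ) (x y : En n) : 0 ≤ nsKer n s x y :=
  Real.rpow_nonneg dist_nonneg _

lemma nsKer_inv_le {n : ℕ} {s : ℝ} (hs : 0 < s) {x y : En n} {δ : ℝ} (hδ : 0 < δ)
    (h : δ ≤ dist x y) : (nsKer n s x y)⁻¹ ≤ (δ ^ ((n : ℝ) + 2 * s))⁻¹ :=
  inv_anti₀ (Real.rpow_pos_of_pos hδ _) (Real.rpow_le_rpow hδ.le h (by positivity))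

lemma continuous_nsKer {n : ℕ} {s : ℝ} (hs : 0 < s) :
    Continuous fun q : En n × En n => nsKer n s q.1 q.2 :=
  (continuous_fst.dist continuous_snd).rpow_const fun _ => Or.inr (by positivity)

lemma exists_ball_dist_ge {n : ℕ} {Ω : Set (En n)} {x : En n} (hx : x ∉ closure Ω) :
    ∃ δ > 0, ∀ x' ∈ Metric.ball x δ, ∀ y ∈ Ω, δ ≤ dist x' y := by
  obtain ⟨δ, hδ, hball⟩ := Metric.isOpen_iff.1 isClosed_closure.isOpen_compl x hx
  refine ⟨δ / 2, by positivity, fun x' hx' y hy => ?_⟩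
  have h1 : ¬ dist y x < δ := fun h => hball h (subset_closure hy)
  have h2 := dist_triangle y x' x
  rw [Metric.mem_ball] at hx'
  rw [dist_comm x' y]
  linarith

lemma aestronglyMeasurable_div_nsKer {n : ℕ} {s : ℝ} (hs : 0 < s) {Ω : Set (En n)}
    (hΩ : IsOpen Ω) {f : En n → ℝ} (hf : ContinuousOn f Ω) (x : En n) :
    AEStronglyMeasurable (fun y => f y / nsKer n s x y) (volume.restrict Ω) :=
  ((hf.aestronglyMeasurable hΩ.measurableSet).aemeasurable.div
    ((continuous_nsKer hs).comp (Continuous.prodMk_right x)).aemeasurable).aestronglyMeasurable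

lemma norm_div_nsKer_le {n : ℕ} {s : ℝ} (hs : 0 < s) {f : En n → ℝ} {M δ : ℝ} {x y : En n}
    (hM : |f y| ≤ M) (hδ : 0 < δ) (h : δ ≤ dist x y) :
    ‖f y / nsKer n s x y‖ ≤ M * (δ ^ ((n : ℝ) + 2 * s))⁻¹ := by
  rw [norm_div, Real.norm_eq_abs, Real.norm_of_nonneg (nsKer_nonneg n s x y), div_eq_mul_inv]
  exact mul_le_mul hM (nsKer_inv_le hs hδ h) (inv_nonneg.2 (nsKer_nonneg _ _ _ _))
    ((abs_nonneg _).trans hM)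

lemma integrableOn_div_nsKer {n : ℕ} {s : ℝ} (hs : 0 < s) {Ω : Set (En n)}
    (hΩ : IsOpen Ω) (hb : IsBounded Ω) {f : En n → ℝ} (hf : ContinuousOn f Ω) {M : ℝ}
    (hM : ∀ y ∈ Ω, |f y| ≤ M) {x : En n} (hx : x ∉ closure Ω) :
    IntegrableOn (fun y => f y / nsKer n s x y) Ω := by
  obtain ⟨δ, hδ, h⟩ := exists_ball_dist_ge hx
  refine IntegrableOn.of_bound hb.measure_lt_top (aestronglyMeasurable_div_nsKer hs hΩ hf x)
    (M * (δ ^ ((n : ℝ) + 2 * s))⁻¹) ?_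
  exact (ae_restrict_mem hΩ.measurableSet).mono fun y hy =>
    norm_div_nsKer_le hs (hM y hy) hδ (h x (Metric.mem_ball_self hδ) y hy)

lemma continuousAt_integral_div_nsKer {n : ℕ} {s : ℝ} (hs : 0 < s) {Ω : Set (En n)}
    (hΩ : IsOpen Ω) (hb : IsBounded Ω) {f : En n → ℝ} (hf : ContinuousOn f Ω) {M : ℝ}
    (hM : ∀ y ∈ Ω, |f y| ≤ M) {x : En n} (hx : x ∉ closure Ω) :
    ContinuousAt (fun x => ∫ y in Ω, f y / nsKer n s x y) x := by
  obtain ⟨δ, hδ, h⟩ := exists_ball_dist_ge hx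
  refine continuousAt_of_dominated (bound := fun _ => M * (δ ^ ((n : ℝ) + 2 * s))⁻¹)
    (Eventually.of_forall fun x => aestronglyMeasurable_div_nsKer hs hΩ hf x) ?_
    (integrableOn_const hb.measure_lt_top.ne) ?_
  · filter_upwards [Metric.ball_mem_nhds x hδ] with x' hx'
    exact (ae_restrict_mem hΩ.measurableSet).mono fun y hy =>
      norm_div_nsKer_le hs (hM y hy) hδ (h x' hx' y hy)
  · refine (ae_restrict_mem hΩ.measurableSet).mono fun y hy => ?_
    refine continuousAt_const.div
      ((continuous_nsKer hs).comp (Continuous.prodMk_left y)).continuousAt ?_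
    exact (Real.rpow_pos_of_pos
      (hδ.trans_le (h x (Metric.mem_ball_self hδ) y hy)) _).ne'

lemma integrableOn_inv_nsKer {n : ℕ} {s : ℝ} (hs : 0 < s) {Ω : Set (En n)}
    (hΩ : IsOpen Ω) (hb : IsBounded Ω) {x : En n} (hx : x ∉ closure Ω) :
    IntegrableOn (fun y => (nsKer n s x y)⁻¹) Ω := by
  simpa using integrableOn_div_nsKer hs hΩ hb (f := fun _ => 1) continuousOn_const
    (M := 1) (by simp) hx

lemma integral_inv_nsKer_pos {n : ℕ} {s : ℝ} (hs : 0 < s) {Ω : Set (En n)}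
    (hΩ : IsOpen Ω) (hb : IsBounded Ω) (hne : Ω.Nonempty) {x : En n} (hx : x ∉ closure Ω) :
    0 < ∫ y in Ω, (nsKer n s x y)⁻¹ := by
  rw [setIntegral_pos_iff_support_of_nonneg_ae
    (Eventually.of_forall fun y => inv_nonneg.2 (nsKer_nonneg n s x y))
    (integrableOn_inv_nsKer hs hΩ hb hx)]
  refine (hΩ.measure_pos volume hne).trans_le (measure_mono fun y hy => ⟨?_, hy⟩)
  have hxy : x ≠ y := fun h => hx (h ▸ subset_closure hy)
  exact (inv_pos.2 (Real.rpow_pos_of_pos (dist_pos.2 hxy) _)).ne.symm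

/-! ### Concentration at the boundary -/

/-- The total weight of the Neumann average blows up at the boundary. -/
lemma tendsto_integral_inv_nsKer {n : ℕ} (hn : 0 < n) {s : ℝ} (hs : 0 < s) {Ω : Set (En n)}
    (hΩ : IsC1Domain n Ω) {p : En n} (hp : p ∈ frontier Ω) :
    Tendsto (fun x => ∫ y in Ω, (nsKer n s x y)⁻¹) (𝓝[(closure Ω)ᶜ] p) atTop := by
  obtain ⟨η, hη, t₀, ht₀, hcork⟩ := hΩ.exists_corkscrew hn hp
  obtain ⟨ho, hb, -, -⟩ := hΩ
  set ω : ℝ := volume.real (Metric.ball (0 : En n) 1) with hω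
  have hωpos : 0 < ω := ENNReal.toReal_pos (Metric.measure_ball_pos _ _ one_pos).ne'
    measure_ball_lt_top.ne
  set C : ℝ := η ^ n * ω * ((2 : ℝ) ^ ((n : ℝ) + 2 * s))⁻¹ with hC
  have hCpos : 0 < C := by positivity
  have hdist : Tendsto (fun x : En n => dist x p) (𝓝[(closure Ω)ᶜ] p) (𝓝[>] 0) := by
    refine tendsto_nhdsWithin_iff.2 ⟨?_, ?_⟩
    · have : Tendsto (fun x : En n => dist x p) (𝓝 p) (𝓝 (dist p p)) :=
        (continuous_id.dist continuous_const).continuousAt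
      rw [dist_self] at this
      exact this.mono_left nhdsWithin_le_nhds
    · filter_upwards [self_mem_nhdsWithin] with x hx
      exact dist_pos.2 fun h => hx (h ▸ hp.1)
  have hmain : Tendsto (fun x : En n => C * dist x p ^ (-(2 * s))) (𝓝[(closure Ω)ᶜ] p) atTop :=
    ((tendsto_rpow_neg_nhdsGT_zero (by linarith)).comp hdist).const_mul_atTop hCpos
  refine tendsto_atTop_mono' _ ?_ hmain
  filter_upwards [self_mem_nhdsWithin, hdist (Ioo_mem_nhdsGT ht₀)] with x hx hxt
  obtain ⟨d, hddef⟩ : ∃ d, d = dist x p := ⟨_, rfl⟩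
  obtain ⟨hd, hdt⟩ : 0 < d ∧ d < t₀ := hddef ▸ hxt
  rw [← hddef]
  obtain ⟨c, hc⟩ := hcork d hd hdt
  have hint := integrableOn_inv_nsKer hs ho hb hx
  have hsub : Metric.ball c (η * d) ⊆ Ω := fun y hy => (hc hy).1
  calc C * d ^ (-(2 * s))
      = volume.real (Metric.ball c (η * d)) * ((2 * d) ^ ((n : ℝ) + 2 * s))⁻¹ := by
        rw [measureReal_def, Measure.addHaar_ball_of_pos _ _ (by positivity), ENNReal.toReal_mul,
          ENNReal.toReal_ofReal (by positivity), ← measureReal_def, ← hω,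
          Real.mul_rpow (by norm_num) hd.le, Real.rpow_add hd, Real.rpow_natCast,
          Real.rpow_neg hd.le, finrank_euclideanSpace_fin, hC, mul_pow]
        field_simp
    _ = ∫ _ in Metric.ball c (η * d), ((2 * d) ^ ((n : ℝ) + 2 * s))⁻¹ := by
        rw [setIntegral_const, smul_eq_mul]
    _ ≤ ∫ y in Metric.ball c (η * d), (nsKer n s x y)⁻¹ := by
        refine setIntegral_mono_on (integrableOn_const measure_ball_lt_top.ne)
          (hint.mono_set hsub) measurableSet_ball fun y hy => ?_
        have hxy : x ≠ y := fun h => hx (h ▸ subset_closure (hsub hy))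
        refine inv_anti₀ (Real.rpow_pos_of_pos (dist_pos.2 hxy) _)
          (Real.rpow_le_rpow dist_nonneg ?_ (by positivity))
        have h1 : dist y p < d := (hc hy).2
        have h2 := dist_triangle_right x y p
        linarith
    _ ≤ ∫ y in Ω, (nsKer n s x y)⁻¹ :=
        setIntegral_mono_set hint
          (Eventually.of_forall fun y => inv_nonneg.2 (nsKer_nonneg n s x y))
          hsub.eventuallyLE

lemma neumann_tendsto_boundary {n : ℕ} (hn : 0 < n) {s : ℝ} (hs : 0 < s) {Ω : Set (En n)}
    (hΩ : IsC1Domain n Ω) {u : En n → ℝ} (hu : ContinuousOn u (closure Ω))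
    {M : ℝ} (hM : ∀ y ∈ closure Ω, |u y| ≤ M)
    (hNeu : ∀ x ∉ closure Ω,
      u x = (∫ y in Ω, u y / nsKer n s x y) / ∫ y in Ω, (nsKer n s x y)⁻¹)
    {p : En n} (hp : p ∈ frontier Ω) :
    Tendsto u (𝓝[(closure Ω)ᶜ] p) (𝓝 (u p)) := by
  have hlim := tendsto_integral_inv_nsKer hn hs hΩ hp
  obtain ⟨ho, hb, hne, -⟩ := hΩ
  rw [Metric.tendsto_nhds]
  intro ε hε
  obtain ⟨δ, hδ, hδu⟩ := Metric.continuousOn_iff.1 hu p hp.1 (ε / 2) (by positivity)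
  set A : ℝ := 2 * M * ((δ / 2) ^ ((n : ℝ) + 2 * s))⁻¹ with hA
  have hM0 : 0 ≤ M := (abs_nonneg _).trans (hM p hp.1)
  have hA0 : 0 ≤ A := by positivity
  filter_upwards [self_mem_nhdsWithin, mem_nhdsWithin_of_mem_nhds
    (Metric.ball_mem_nhds p (half_pos hδ)),
    hlim.eventually_gt_atTop (volume.real Ω * A / (ε / 2))] with x hx hxp hbig
  rw [Metric.mem_ball] at hxp
  set D : ℝ := ∫ y in Ω, (nsKer n s x y)⁻¹ with hD
  have hDpos : 0 < D := integral_inv_nsKer_pos hs ho hb hne hx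
  have hI1 := integrableOn_inv_nsKer hs ho hb hx
  have hIu := integrableOn_div_nsKer hs ho hb (hu.mono subset_closure)
    (fun y hy => hM y (subset_closure hy)) hx
  have hdiff : (u x - u p) * D = ∫ y in Ω, (u y - u p) / nsKer n s x y := by
    have h1 : u x * D = ∫ y in Ω, u y / nsKer n s x y := by
      rw [hNeu x hx]
      exact div_mul_cancel₀ _ hDpos.ne'
    rw [sub_mul, h1, hD, ← integral_const_mul, ← integral_sub hIu (hI1.const_mul _)]
    refine integral_congr_ae (Eventually.of_forall fun y => ?_)
    simp only [sub_mul, div_eq_mul_inv]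
  have hbound : ‖∫ y in Ω, (u y - u p) / nsKer n s x y‖ ≤
      ∫ y in Ω, (ε / 2 * (nsKer n s x y)⁻¹ + A) := by
    refine norm_integral_le_of_norm_le
      ((hI1.const_mul _).add (integrableOn_const hb.measure_lt_top.ne)) ?_
    refine (ae_restrict_mem ho.measurableSet).mono fun y hy => ?_
    have hk := inv_nonneg.2 (nsKer_nonneg n s x y)
    -- Points of `Ω` near `p` contribute a small oscillation, far ones a bounded weight.
    by_cases hyp : dist y p < δ
    · have h1 : |u y - u p| ≤ ε / 2 := (hδu y (subset_closure hy) hyp).le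
      rw [norm_div, Real.norm_eq_abs, Real.norm_of_nonneg (nsKer_nonneg n s x y), div_eq_mul_inv]
      have := mul_le_mul_of_nonneg_right h1 hk
      linarith
    · have h1 : δ / 2 ≤ dist x y := by
        have := dist_triangle_left y p x
        linarith
      have h2 : |u y - u p| ≤ 2 * M := by
        have := abs_sub (u y) (u p)
        have := hM y (subset_closure hy)
        have := hM p hp.1
        linarith
      have h3 := norm_div_nsKer_le hs (f := fun y => u y - u p) h2 (half_pos hδ) h1
      have : 0 ≤ ε / 2 * (nsKer n s x y)⁻¹ := by positivity
      linarith
  rw [← hdiff, integral_add (hI1.const_mul _) (integrableOn_const hb.measure_lt_top.ne),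
    integral_const_mul, setIntegral_const, smul_eq_mul, norm_mul, Real.norm_of_nonneg hDpos.le,
    ← hD] at hbound
  rw [div_lt_iff₀ (by positivity)] at hbig
  rw [dist_eq_norm]
  refine lt_of_mul_lt_mul_right (a := D) ?_ hDpos.le
  linarith

end NeumannContinuity

-- STATEMENT 15
theorem neumann_continuity (n : ℕ) (hn : 0 < n) (s : ℝ) (hs : s ∈ Set.Ioo (0 : ℝ) 1)
    (Ω : Set (En n)) (hΩ : IsC1Domain n Ω)
    (u : En n → ℝ) (hu : ContinuousOn u (closure Ω))
    (hNeu : ∀ x ∉ closure Ω,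
      u x = (∫ y in Ω, u y / nsKer n s x y) / ∫ y in Ω, (nsKer n s x y)⁻¹) :
    Continuous u := by
  have hs0 : 0 < s := hs.1
  obtain ⟨ho, hb, hne, -⟩ := id hΩ
  obtain ⟨M, hM⟩ := hb.isCompact_closure.exists_bound_of_continuousOn hu
  rw [continuous_iff_continuousAt]
  intro x
  by_cases hx : x ∈ closure Ω
  · by_cases hxΩ : x ∈ Ω
    · exact hu.continuousAt (mem_of_superset (ho.mem_nhds hxΩ) subset_closure)
    · have hfr : x ∈ frontier Ω := by
        rw [ho.frontier_eq]
        exact ⟨hx, hxΩ⟩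
      have h1 : ContinuousWithinAt u (closure Ω)ᶜ x :=
        neumann_tendsto_boundary hn hs0 hΩ hu hM hNeu hfr
      have h2 := (hu x hx).union h1
      rwa [union_compl_self, continuousWithinAt_univ] at h2
  · have hnum := continuousAt_integral_div_nsKer hs0 ho hb (hu.mono subset_closure)
      (fun y hy => hM y (subset_closure hy)) hx
    have hden : ContinuousAt (fun x => ∫ y in Ω, (nsKer n s x y)⁻¹) x := by
      simpa using continuousAt_integral_div_nsKer hs0 ho hb (f := fun _ => 1)
        continuousOn_const (M := 1) (by simp) hx
    refine (hnum.div hden (integral_inv_nsKer_pos hs0 ho hb hne hx).ne').congr ?_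
    filter_upwards [isClosed_closure.isOpen_compl.mem_nhds hx] with z hz
    exact (hNeu z hz).symm
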